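/- Let K be a field of characteristic zero, H, I₂ ∈ K, and let G₁(x) = x, G₂(x) = x² + 2Hx + I₂/4, G₃(x) = x² + 2Hx + I₂/4 − 1, with Richelot brackets L₁ = [G₂,G₃] = −2(X + H), L₂ = [G₃,G₁] = X² + 1 − I₂/4, L₃ = [G₁,G₂] = −X² + I₂/4 (where [G,G̃] := G'G̃ − G G̃'). Then for all x, X ∈ K: G₁(x)L₁(X) + G₂(x)L₂(X) + G₃(x)L₃(X) = (x − X)². Consequently, whenever G₁(x)L₁(X) + G₂(x)L₂(X) = 0, one has G₃(x)·L₃(X) = (x − X)², and hence (G₁G₂G₃)(x)·(L₁L₂L₃)(X) = −(G₁(x)L₁(X)(x − X))². -/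

import Mathlib

/-!
The sum `∑ Gᵢ(x) [Gᵢ₊₁, Gᵢ₊₂](y)` is an alternating trilinear form in the coefficient vectors of
three quadratics `G₀, G₁, G₂`, hence a multiple of their determinant `Δ`; evaluating it on
`1, t, t²` shows that it equals `-Δ (x - y)²`. With `Lᵢ = [Gᵢ₊₁, Gᵢ₊₂]`, if the first two
terms cancel, then the third one is `-Δ (x - y)²`, and multiplying it by
`G₀(x) L₀(y) · G₁(x) L₁(y) = -(G₀(x) L₀(y))²` gives the product formula. For the curve `C₂` one has
`Δ = -1`.
-/

section RichelotIdentity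

open Polynomial

variable {R : Type*} [CommRing R] {G : Fin 3 → R[X]}

/-- The polynomials `Lᵢ = [Gᵢ₊₁, Gᵢ₊₂]` of the Richelot transform, with indices modulo `3`. As the
Richelot bracket is `[p, q] = p' q - p q'`, it is the Wronskian of `q` and `p`, in this order. -/
noncomputable def richelotTransform (G : Fin 3 → R[X]) (i : Fin 3) : R[X] :=
  wronskian (G (i + 2)) (G (i + 1))

/-- The determinant `Δ` of a triple of quadratics: row `i` lists the coefficients of `G i` in
increasing degree. -/
noncomputable def richelotDet (G : Fin 3 → R[X]) : R :=
  Matrix.det (Matrix.of fun i j : Fin 3 ↦ (G i).coeff j)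

theorem eval_eq_of_natDegree_le_two {p : R[X]} (hp : p.natDegree ≤ 2) (x : R) :
    p.eval x = p.coeff 0 + p.coeff 1 * x + p.coeff 2 * x ^ 2 := by
  simp [eval_eq_sum_range' (Nat.lt_succ_of_le hp), Finset.sum_range_succ]

theorem eval_derivative_eq_of_natDegree_le_two {p : R[X]} (hp : p.natDegree ≤ 2) (x : R) :
    p.derivative.eval x = p.coeff 1 + 2 * p.coeff 2 * x := by
  have hderiv : p.derivative.natDegree < 2 := by
    have := natDegree_derivative_le p
    lia
  simp only [eval_eq_sum_range' hderiv, Finset.sum_range_succ, Finset.sum_range_zero,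
    coeff_derivative]
  push_cast
  ring

theorem sum_eval_mul_eval_richelotTransform (hG : ∀ i, (G i).natDegree ≤ 2) (x y : R) :
    ∑ i, (G i).eval x * (richelotTransform G i).eval y = -richelotDet G * (x - y) ^ 2 := by
  simp only [richelotTransform, richelotDet, wronskian, eval_sub, eval_mul,
    eval_eq_of_natDegree_le_two (hG _), eval_derivative_eq_of_natDegree_le_two (hG _),
    Fin.sum_univ_three, Matrix.det_fin_three, Matrix.of_apply, Fin.isValue, Fin.reduceAdd,
    Fin.val_zero, Fin.val_one, Fin.val_two]
  ring

section Correspondence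

variable {x y : R}

theorem eval_two_mul_eval_richelotTransform_two (hG : ∀ i, (G i).natDegree ≤ 2)
    (hxy : (G 0).eval x * (richelotTransform G 0).eval y +
      (G 1).eval x * (richelotTransform G 1).eval y = 0) :
    (G 2).eval x * (richelotTransform G 2).eval y = -richelotDet G * (x - y) ^ 2 := by
  rw [← sum_eval_mul_eval_richelotTransform hG, Fin.sum_univ_three, hxy, zero_add]

theorem prod_eval_mul_prod_eval_richelotTransform (hG : ∀ i, (G i).natDegree ≤ 2)
    (hxy : (G 0).eval x * (richelotTransform G 0).eval y +
      (G 1).eval x * (richelotTransform G 1).eval y = 0) :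
    (∏ i, (G i).eval x) * ∏ i, (richelotTransform G i).eval y =
      richelotDet G * ((G 0).eval x * (richelotTransform G 0).eval y * (x - y)) ^ 2 := by
  set a := (G 0).eval x * (richelotTransform G 0).eval y
  have hb : (G 1).eval x * (richelotTransform G 1).eval y = -a :=
    eq_neg_of_add_eq_zero_right hxy
  calc (∏ i, (G i).eval x) * ∏ i, (richelotTransform G i).eval y
      = a * ((G 1).eval x * (richelotTransform G 1).eval y) *
          ((G 2).eval x * (richelotTransform G 2).eval y) := by
        rw [← Finset.prod_mul_distrib, Fin.prod_univ_three]
    _ = a * -a * (-richelotDet G * (x - y) ^ 2) := by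
        rw [hb, eval_two_mul_eval_richelotTransform_two hG hxy]
    _ = richelotDet G * (a * (x - y)) ^ 2 := by ring

end Correspondence

/-- The factors `t`, `t² + 2Ht + c` and `t² + 2Ht + c - 1` of the polynomial defining `C₂`. The
parameter `c` stands for `I₂ / 4`, so that no division is needed. -/
noncomputable def kowalewskiTriple (H c : R) : Fin 3 → R[X] :=
  ![X, X ^ 2 + C (2 * H) * X + C c, X ^ 2 + C (2 * H) * X + C c - 1]

variable (H c : R)

theorem natDegree_kowalewskiTriple_le (i : Fin 3) : (kowalewskiTriple H c i).natDegree ≤ 2 := by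
  fin_cases i
  · exact natDegree_X_le.trans one_le_two
  all_goals
    dsimp [kowalewskiTriple]
    compute_degree

theorem richelotDet_kowalewskiTriple : richelotDet (kowalewskiTriple H c) = -1 := by
  have coeff_matrix : (Matrix.of fun i j : Fin 3 ↦ (kowalewskiTriple H c i).coeff j) =
      !![0, 1, 0; c, 2 * H, 1; c - 1, 2 * H, 1] := by
    ext i j
    fin_cases i <;> fin_cases j <;> simp [kowalewskiTriple, coeff_X, coeff_one, coeff_C]
  simp [richelotDet, coeff_matrix, Matrix.det_fin_three, ← add_sub_assoc]

theorem richelotTransform_kowalewskiTriple :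
    richelotTransform (kowalewskiTriple H c) =
      ![-2 * (X + C H), X ^ 2 + 1 - C c, -X ^ 2 + C c] := by
  have derivative_quadratic :
      derivative (X ^ 2 + C (2 * H) * X + C c) = 2 * (X + C H) := by
    rw [derivative_add, derivative_add, derivative_X_sq, derivative_C_mul_X, derivative_C, C_mul,
      C_ofNat]
    ring
  funext i
  fin_cases i <;> dsimp [richelotTransform, kowalewskiTriple, wronskian] <;>
    simp only [derivative_sub, derivative_quadratic, derivative_X, derivative_one] <;>
    simp only [C_mul, C_ofNat] <;>
    ring

end RichelotIdentity

theorem richelot_identity_for_C₂_general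
    {R : Type*} [CommRing R] (H c : R)
    (G₁ G₂ G₃ L₁ L₂ L₃ : R → R)
    (hG₁ : ∀ x, G₁ x = x)
    (hG₂ : ∀ x, G₂ x = x ^ 2 + 2 * H * x + c)
    (hG₃ : ∀ x, G₃ x = x ^ 2 + 2 * H * x + c - 1)
    (hL₁ : ∀ X, L₁ X = -2 * (X + H))
    (hL₂ : ∀ X, L₂ X = X ^ 2 + 1 - c)
    (hL₃ : ∀ X, L₃ X = -X ^ 2 + c) :
    (∀ x X : R, G₁ x * L₁ X + G₂ x * L₂ X + G₃ x * L₃ X = (x - X) ^ 2) ∧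
    (∀ x X : R, G₁ x * L₁ X + G₂ x * L₂ X = 0 →
      G₃ x * L₃ X = (x - X) ^ 2 ∧
      (G₁ x * G₂ x * G₃ x) * (L₁ X * L₂ X * L₃ X)
        = -(G₁ x * L₁ X * (x - X)) ^ 2) := by
  have hdeg := natDegree_kowalewskiTriple_le H c
  have hΔ := richelotDet_kowalewskiTriple H c
  have hG (x : R) (i : Fin 3) :
      (kowalewskiTriple H c i).eval x = ![G₁ x, G₂ x, G₃ x] i := by
    fin_cases i <;> simp [kowalewskiTriple, hG₁, hG₂, hG₃]
  have hL (X : R) (i : Fin 3) :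
      (richelotTransform (kowalewskiTriple H c) i).eval X = ![L₁ X, L₂ X, L₃ X] i := by
    fin_cases i <;> simp [richelotTransform_kowalewskiTriple, hL₁, hL₂, hL₃]
  refine ⟨fun x X ↦ ?_, fun x X hxX ↦ ?_⟩
  · simpa [hG, hL, hΔ, Fin.sum_univ_three] using sum_eval_mul_eval_richelotTransform hdeg x X
  · have hlocus : (kowalewskiTriple H c 0).eval x *
          (richelotTransform (kowalewskiTriple H c) 0).eval X +
        (kowalewskiTriple H c 1).eval x *
          (richelotTransform (kowalewskiTriple H c) 1).eval X = 0 := by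
      simpa [hG, hL] using hxX
    constructor
    · simpa [hG, hL, hΔ] using eval_two_mul_eval_richelotTransform_two hdeg hlocus
    · simpa [hG, hL, hΔ, Fin.prod_univ_three] using
        prod_eval_mul_prod_eval_richelotTransform hdeg hlocus

/-- Richelot's bilinear identity specialized to the curve `C₂` of the
Kowalewski top: with `G₁(x) = x`, `G₂(x) = x² + 2Hx + I₂/4`, `G₃ = G₂ − 1`
and brackets `L₁(X) = −2(X + H)`, `L₂(X) = X² + 1 − I₂/4`, `L₃(X) = −X² + I₂/4`,
one has `G₁(x)L₁(X) + G₂(x)L₂(X) + G₃(x)L₃(X) = (x − X)²`; consequently, on the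
correspondence locus `G₁(x)L₁(X) + G₂(x)L₂(X) = 0` one gets
`G₃(x)L₃(X) = (x − X)²` and
`(G₁G₂G₃)(x)·(L₁L₂L₃)(X) = −(G₁(x)L₁(X)(x − X))²`. -/
theorem richelot_identity_for_C₂
    (K : Type*) [Field K] [CharZero K] (H I₂ : K)
    (G₁ G₂ G₃ L₁ L₂ L₃ : K → K)
    (hG₁ : ∀ x, G₁ x = x)
    (hG₂ : ∀ x, G₂ x = x ^ 2 + 2 * H * x + I₂ / 4)
    (hG₃ : ∀ x, G₃ x = x ^ 2 + 2 * H * x + I₂ / 4 - 1)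
    (hL₁ : ∀ X, L₁ X = -2 * (X + H))
    (hL₂ : ∀ X, L₂ X = X ^ 2 + 1 - I₂ / 4)
    (hL₃ : ∀ X, L₃ X = -X ^ 2 + I₂ / 4) :
    (∀ x X : K, G₁ x * L₁ X + G₂ x * L₂ X + G₃ x * L₃ X = (x - X) ^ 2) ∧
    (∀ x X : K, G₁ x * L₁ X + G₂ x * L₂ X = 0 →
      G₃ x * L₃ X = (x - X) ^ 2 ∧
      (G₁ x * G₂ x * G₃ x) * (L₁ X * L₂ X * L₃ X)
        = -(G₁ x * L₁ X * (x - X)) ^ 2) := by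
  exact richelot_identity_for_C₂_general H (I₂ / 4) G₁ G₂ G₃ L₁ L₂ L₃ hG₁ hG₂ hG₃ hL₁ hL₂ hL₃
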